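/- (Compression multiplicativity estimate) Let P ∈ M_n(ℂ) be a nonzero projection of rank k, and define φ(x) = PxP viewed as a map into the k×k matrix algebra PM_n(ℂ)P with normalized trace tr_k = Tr(·)/Tr(P). Then for all a, b ∈ M_n(ℂ), ‖φ(ab) − φ(a)φ(b)‖₂ ≤ ‖b‖ · ( tr_k(φ(aa*) − φ(a)φ(a*)) + tr_k(φ(a*a) − φ(a*)φ(a)) )^{1/2}, where ‖x‖₂ = tr_k(x*x)^{1/2}. -/

import Mathlib

open Matrix

/-- The (L²) operator norm of a complex matrix. -/
noncomputable def opNorm {n : ℕ} (x : Matrix (Fin n) (Fin n) ℂ) : ℝ :=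
  ‖Matrix.toEuclideanCLM (𝕜 := ℂ) (n := Fin n) x‖

/-- The 2-norm `‖x‖₂ = (Tr(x* x)/k)^{1/2}` with respect to the trace normalized
by `k` (the rank of the corner projection). -/
noncomputable def cornerNorm2 {n : ℕ} (k : ℕ) (x : Matrix (Fin n) (Fin n) ℂ) : ℝ :=
  Real.sqrt (((xᴴ * x).trace / (k : ℂ)).re)

theorem trace_eq_sum_cols {n : ℕ} (A : Matrix (Fin n) (Fin n) ℂ) :
    (Aᴴ * A).trace.re = ∑ j, ‖WithLp.toLp 2 (fun i => A i j)‖ ^ 2 := by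
  simp only [Matrix.trace, Matrix.diag, Matrix.mul_apply, Matrix.conjTranspose_apply,
    EuclideanSpace.norm_sq_eq, Complex.re_sum]
  refine Finset.sum_congr rfl fun j _ => Finset.sum_congr rfl fun i _ => ?_
  rw [← Complex.normSq_eq_norm_sq, Complex.normSq_apply]
  simp

theorem trace_mul_le {n : ℕ} (M N : Matrix (Fin n) (Fin n) ℂ) :
    ((M * N)ᴴ * (M * N)).trace.re ≤ opNorm M ^ 2 * (Nᴴ * N).trace.re := by
  rw [trace_eq_sum_cols, trace_eq_sum_cols, Finset.mul_sum]
  refine Finset.sum_le_sum fun j _ => ?_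
  have h := (Matrix.toEuclideanCLM (𝕜 := ℂ) (n := Fin n) M).le_opNorm
    (WithLp.toLp 2 (fun i => N i j))
  rw [← mul_pow]
  refine pow_le_pow_left₀ (norm_nonneg _) (le_trans (le_of_eq ?_) h) 2
  rw [Matrix.toEuclideanCLM_toLp]
  rfl

theorem opNorm_conjTranspose {n : ℕ} (M : Matrix (Fin n) (Fin n) ℂ) :
    opNorm Mᴴ = opNorm M := by
  unfold opNorm
  rw [← Matrix.star_eq_conjTranspose, map_star]
  exact (ContinuousLinearMap.adjoint (𝕜 := ℂ)).norm_map _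

theorem opNorm_proj_le {n : ℕ} (P : Matrix (Fin n) (Fin n) ℂ)
    (hP : Pᴴ = P) (hP2 : P * P = P) : opNorm P ≤ 1 := by
  have h : opNorm P = opNorm P * opNorm P := by
    unfold opNorm
    conv_rhs => rw [← CStarRing.norm_star_mul_self, ← map_star, ← map_mul,
      Matrix.star_eq_conjTranspose, hP, hP2]
  have h0 : 0 ≤ opNorm P := norm_nonneg _
  nlinarith

theorem trace_self_nonneg {n : ℕ} (A : Matrix (Fin n) (Fin n) ℂ) :
    0 ≤ (Aᴴ * A).trace.re := by
  rw [trace_eq_sum_cols]; positivity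

theorem defect_eq {n : ℕ} (P : Matrix (Fin n) (Fin n) ℂ)
    (hP : Pᴴ = P) (hP2 : P * P = P) (a : Matrix (Fin n) (Fin n) ℂ) :
    P * (a * aᴴ) * P - (P * a * P) * (P * aᴴ * P)
      = ((1 - P) * aᴴ * P)ᴴ * ((1 - P) * aᴴ * P) := by
  have h3 : ∀ x, P * (P * x) = P * x := fun x => by rw [← mul_assoc, hP2]
  simp only [conjTranspose_mul, conjTranspose_sub, conjTranspose_one, conjTranspose_conjTranspose,
    hP, mul_sub, sub_mul, mul_assoc, one_mul, mul_one, hP2, h3]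
  abel

/-- Compression multiplicativity estimate: for the compression `φ(x) = PxP` by a rank-`k`
projection `P`, one has
`‖φ(ab) − φ(a)φ(b)‖₂ ≤ ‖b‖·(tr_k(φ(aa*) − φ(a)φ(a*)) + tr_k(φ(a*a) − φ(a*)φ(a)))^{1/2}`. -/
theorem compression_multiplicativity_estimate {n : ℕ} (P : Matrix (Fin n) (Fin n) ℂ)
    (hP : Pᴴ = P) (hP2 : P * P = P) (k : ℕ) (hk : 0 < k) (htr : P.trace = (k : ℂ))
    (a b : Matrix (Fin n) (Fin n) ℂ) :
    cornerNorm2 k (P * (a * b) * P - (P * a * P) * (P * b * P))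
      ≤ opNorm b *
        Real.sqrt ((((P * (a * aᴴ) * P - (P * a * P) * (P * aᴴ * P)).trace / (k : ℂ)).re
          + ((P * (aᴴ * a) * P - (P * aᴴ * P) * (P * a * P)).trace / (k : ℂ)).re)) := by
  have h3 : ∀ x, P * (P * x) = P * x := fun x => by rw [← mul_assoc, hP2]
  have e1 := defect_eq P hP hP2 a
  have e2 := defect_eq P hP hP2 aᴴ
  rw [conjTranspose_conjTranspose] at e2
  set N := (1 - P) * aᴴ * P with hN
  have eX : (P * (a * b) * P - (P * a * P) * (P * b * P)) = (P * (bᴴ * N))ᴴ := by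
    simp only [hN, conjTranspose_mul, conjTranspose_sub, conjTranspose_one,
      conjTranspose_conjTranspose, hP, mul_sub, sub_mul, mul_assoc, one_mul, mul_one, hP2, h3]
  have hk' : (0 : ℝ) < k := by exact_mod_cast hk
  have hdiv : ∀ z : ℂ, (z / (k : ℂ)).re = z.re / k := fun z => by
    rw [← Complex.ofReal_natCast, Complex.div_ofReal_re]
  have hb : 0 ≤ opNorm b := norm_nonneg _
  have hp0 : 0 ≤ opNorm P := norm_nonneg _
  have hp1 := opNorm_proj_le P hP hP2
  rw [e1, e2, eX, cornerNorm2, conjTranspose_conjTranspose, Matrix.trace_mul_comm, hdiv, hdiv, hdiv]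
  have t1 := trace_mul_le P (bᴴ * N)
  have t2 := trace_mul_le bᴴ N
  rw [opNorm_conjTranspose] at t2
  have t3 := trace_self_nonneg (bᴴ * N)
  have t4 := trace_self_nonneg ((1 - P) * a * P)
  have hpp : opNorm P ^ 2 ≤ 1 := pow_le_one₀ hp0 hp1
  have t5 : ((P * (bᴴ * N))ᴴ * (P * (bᴴ * N))).trace.re ≤ opNorm b ^ 2 * (Nᴴ * N).trace.re := by
    nlinarith
  rw [← Real.sqrt_sq hb, ← Real.sqrt_mul (sq_nonneg _), ← add_div, ← mul_div_assoc]
  apply Real.sqrt_le_sqrt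
  gcongr
  nlinarith [mul_nonneg (sq_nonneg (opNorm b)) t4]
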